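/- Assume (L,N) is graphically admissible and let O := nb_{H^1}(Y), the set of neighbours of Y in H^1. Then O satisfies the graphical adjustment criterion for A,Y,L,N in G. If, in addition, N ⊆ an_G({A,Y}∪L) or N = V, then for every set Z satisfying the graphical adjustment criterion: Y and Z\O are d-separated by {A} ∪ O in G, and A and O\Z are d-separated by Z in G. -/

import Mathlib

open Relation Set

namespace CausalGraph

variable {V : Type*} [Fintype V] [DecidableEq V]

/-- `p` is a path in the undirected sense from `u` to `v` along adjacency `Adj`:
a nonempty list of pairwise distinct vertices, consecutive ones adjacent,
starting at `u` and ending at `v`. -/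
def IsPath (Adj : V → V → Prop) (u v : V) (p : List V) : Prop :=
  List.Chain' Adj p ∧ p.head? = some u ∧ p.getLast? = some v ∧ p.Nodup

/-- Ancestors of `S` in the digraph `D` (every vertex is an ancestor of itself). -/
def anc (D : V → V → Prop) (S : Set V) : Set V :=
  {u | ∃ v ∈ S, Relation.ReflTransGen D u v}

/-- Descendants of `S` in the digraph `D` (every vertex is a descendant of itself). -/
def desc (D : V → V → Prop) (S : Set V) : Set V :=
  {u | ∃ v ∈ S, Relation.ReflTransGen D v u}

/-- Parents of vertices of `S` in the digraph `D`. -/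
def parents (D : V → V → Prop) (S : Set V) : Set V :=
  {u | ∃ v ∈ S, D u v}

/-- The digraph `D` is acyclic. -/
def Acyclic (D : V → V → Prop) : Prop :=
  ∀ u v, D u v → ¬ Relation.ReflTransGen D v u

/-- Vertices other than `A` lying on a directed path from `A` to `Y`. -/
def cn (D : V → V → Prop) (A Y : V) : Set V :=
  {v | v ≠ A ∧ Relation.ReflTransGen D A v ∧ Relation.ReflTransGen D v Y}

/-- The forbidden set. -/
def forb (D : V → V → Prop) (A Y : V) : Set V :=
  desc D (cn D A Y) ∪ {A}

/-- Proper back-door graph: delete every edge from `A` into `cn D A Y`. -/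
def pbd (D : V → V → Prop) (A Y : V) : V → V → Prop :=
  fun u v => D u v ∧ ¬(u = A ∧ v ∈ cn D A Y)

/-- `y` is an interior vertex of the list `p` with neighbours `x` and `z` on the path. -/
def InteriorAt (p : List V) (x y z : V) : Prop :=
  ∃ s t : List V, p = s ++ x :: y :: z :: t

/-- The path `p` is blocked by `Z` in the digraph `D`: some interior non-collider
lies in `Z`, or some interior collider has no descendant in `Z`. -/
def Blocked (D : V → V → Prop) (Z : Set V) (p : List V) : Prop :=
  (∃ x y z, InteriorAt p x y z ∧ ¬(D x y ∧ D z y) ∧ y ∈ Z) ∨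
  (∃ x y z, InteriorAt p x y z ∧ (D x y ∧ D z y) ∧ ∀ d ∈ desc D {y}, d ∉ Z)

/-- d-separation of `S` and `T` given `Z` in the digraph `D`. -/
def DSep (D : V → V → Prop) (S T Z : Set V) : Prop :=
  ∀ s ∈ S, ∀ t ∈ T, ∀ p : List V,
    IsPath (fun a b => D a b ∨ D b a) s t p → Blocked D Z p

/-- Moral graph of the subgraph of the digraph `D` induced on `Vs`. -/
def moral (D : V → V → Prop) (Vs : Set V) : SimpleGraph V :=
  SimpleGraph.fromRel (fun u v =>
    u ∈ Vs ∧ v ∈ Vs ∧ (D u v ∨ D v u ∨ ∃ w ∈ Vs, D u w ∧ D v w))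

/-- Separation in an undirected graph: every path from `S` to `T` meets `W`. -/
def USep (H : SimpleGraph V) (S T W : Set V) : Prop :=
  ∀ s ∈ S, ∀ t ∈ T, ∀ p : List V, IsPath H.Adj s t p → ∃ z ∈ W, z ∈ p

/-- `Z` is an `A`–`Y` cut in an undirected graph `H` with vertex set `Vs`. -/
def IsCut (Vs : Set V) (H : SimpleGraph V) (A Y : V) (Z : Set V) : Prop :=
  Z ⊆ Vs ∧ Z ∩ {A, Y} = ∅ ∧ ∀ p : List V, IsPath H.Adj A Y p → ∃ z ∈ Z, z ∈ p

def MinimalCut (Vs : Set V) (H : SimpleGraph V) (A Y : V) (Z : Set V) : Prop :=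
  IsCut Vs H A Y Z ∧ ∀ Z' ⊂ Z, ¬ IsCut Vs H A Y Z'

def MinimumCut (Vs : Set V) (H : SimpleGraph V) (A Y : V) (Z : Set V) : Prop :=
  IsCut Vs H A Y Z ∧ ∀ Z', IsCut Vs H A Y Z' → Z.ncard ≤ Z'.ncard

/-- Connected component of `y` in `H` restricted to the complement of `U`:
vertices reachable from `y` by paths avoiding `U`. -/
def cc (H : SimpleGraph V) (U : Set V) (y : V) : Set V :=
  {w | ∃ p : List V, IsPath H.Adj y w p ∧ ∀ x ∈ p, x ∉ U}

/-- Boundary of `S` in `H`: vertices outside `S` adjacent to some vertex of `S`. -/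
def bdry (H : SimpleGraph V) (S : Set V) : Set V :=
  {v | v ∉ S ∧ ∃ u ∈ S, H.Adj v u}

/-- The partial order `Z₁ ⊴_H Z₂` between `A`–`Y` cuts. -/
def TLE (H : SimpleGraph V) (A Y : V) (Z₁ Z₂ : Set V) : Prop :=
  USep H {Y} (Z₂ \ Z₁) Z₁ ∧ USep H {A} (Z₁ \ Z₂) Z₂

/-- Ancestors of `{A, Y} ∪ L`. -/
def ancAYL (D : V → V → Prop) (A Y : V) (L : Set V) : Set V :=
  anc D ({A, Y} ∪ L)

/-- The moral graph `H⁰` of the proper back-door graph induced on `an_G({A,Y} ∪ L)`. -/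
def H0 (D : V → V → Prop) (A Y : V) (L : Set V) : SimpleGraph V :=
  moral (pbd D A Y) (ancAYL D A Y L)

/-- The set of vertices removed from `H⁰` when constructing `H¹`. -/
def Ignore (D : V → V → Prop) (A Y : V) (L N : Set V) : Set V :=
  (ancAYL D A Y L \ {A, Y}) ∩ ((Set.univ \ N) ∪ forb D A Y)

/-- Vertex set of `H¹`. -/
def H1verts (D : V → V → Prop) (A Y : V) (L N : Set V) : Set V :=
  ancAYL D A Y L \ Ignore D A Y L N

/-- The non-parametric adjustment efficiency graph `H¹`: delete the vertices of
`Ignore`, join two remaining vertices if they are joined in `H⁰` by a path all of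
whose intermediate vertices are in `Ignore`, and join `A` and `Y` to every vertex
of `L`. -/
def H1 (D : V → V → Prop) (A Y : V) (L N : Set V) : SimpleGraph V :=
  SimpleGraph.fromRel (fun u v =>
    u ∈ H1verts D A Y L N ∧ v ∈ H1verts D A Y L N ∧
      ((∃ p : List V, IsPath (H0 D A Y L).Adj u v p ∧
          ∀ x ∈ p, x ≠ u → x ≠ v → x ∈ Ignore D A Y L N) ∨
        (u = A ∧ v ∈ L) ∨ (u = Y ∧ v ∈ L)))

/-- The graphical adjustment criterion for `A, Y, L, N` in the DAG `D`. -/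
def GAC (D : V → V → Prop) (A Y : V) (L N Z : Set V) : Prop :=
  DSep (pbd D A Y) {A} {Y} Z ∧ Z ∩ forb D A Y = ∅ ∧ L ⊆ Z ∧ Z ⊆ N

def MinimalGAC (D : V → V → Prop) (A Y : V) (L N Z : Set V) : Prop :=
  GAC D A Y L N Z ∧ ∀ Z' ⊂ Z, ¬ GAC D A Y L N Z'

def MinimumGAC (D : V → V → Prop) (A Y : V) (L N Z : Set V) : Prop :=
  GAC D A Y L N Z ∧ ∀ Z', GAC D A Y L N Z' → Z.ncard ≤ Z'.ncard

/-- Graphical admissibility of the pair `(L, N)`. -/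
def Admissible (D : V → V → Prop) (A Y : V) (L N : Set V) : Prop :=
  ∃ Z, GAC D A Y L N Z

end CausalGraph

namespace CausalGraph

section helpers
variable {V : Type*}

theorem ac_antisymm {D : V → V → Prop} (h : Acyclic D) {u v : V}
    (h1 : ReflTransGen D u v) (h2 : ReflTransGen D v u) : u = v := by
  rcases h1.cases_head with h1 | ⟨w, hw, hwv⟩
  · exact h1
  · exact absurd (hwv.trans h2) (h _ _ hw)

theorem ac_asymm {D : V → V → Prop} (h : Acyclic D) {u v : V}
    (h1 : D u v) : ¬ D v u := fun h2 => h _ _ h1 (ReflTransGen.single h2)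

def okAt (D : V → V → Prop) (Z : Set V) (x y z : V) : Prop :=
  ((D x y ∧ D z y) → ∃ d, ReflTransGen D y d ∧ d ∈ Z) ∧ (¬(D x y ∧ D z y) → y ∉ Z)

def Op (D : V → V → Prop) (Z : Set V) : List V → Prop
  | x :: y :: z :: r => okAt D Z x y z ∧ Op D Z (y :: z :: r)
  | _ => True

theorem Op_tail {D : V → V → Prop} {Z : Set V} {x : V} {l : List V} (h : Op D Z (x :: l)) :
    Op D Z l := by
  match l, h with
  | [], _ => trivial
  | [_], _ => trivial
  | _ :: _ :: _, h => exact h.2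

theorem Op_suffix {D : V → V → Prop} {Z : Set V} : ∀ {s l : List V}, Op D Z (s ++ l) → Op D Z l
  | [], _, h => h
  | _ :: s, _, h => Op_suffix (s := s) (Op_tail h)

theorem Op_split {D : V → V → Prop} {Z : Set V} (x y : V) (c : List V) : ∀ a : List V,
    Op D Z (a ++ x :: y :: c) ↔ Op D Z (a ++ [x, y]) ∧ Op D Z (x :: y :: c)
  | [] => by simp [Op]
  | [u] => by simp [Op]
  | [u, v] => by simp [Op]; tauto
  | u :: v :: w :: a => by
      have := Op_split (D := D) (Z := Z) x y c (v :: w :: a)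
      simp only [List.cons_append, Op] at this ⊢
      tauto

theorem Op_iff {D : V → V → Prop} {Z : Set V} (p : List V) :
    Op D Z p ↔ ∀ x y z, InteriorAt p x y z → okAt D Z x y z := by
  constructor
  · rintro h x y z ⟨s, t, rfl⟩
    exact (Op_suffix h).1
  · intro h
    induction p with
    | nil => trivial
    | cons x l ih =>
      have hl : Op D Z l := ih (by
        rintro a b c ⟨s, t, rfl⟩
        exact h a b c ⟨x :: s, t, rfl⟩)
      match l, hl, h with
      | [], _, _ => trivial
      | [_], _, _ => trivial
      | y :: z :: r, hl, h => exact ⟨h x y z ⟨[], r, rfl⟩, hl⟩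

theorem not_blocked_iff {D : V → V → Prop} {Z : Set V} (p : List V) :
    ¬ Blocked D Z p ↔ Op D Z p := by
  rw [Op_iff]
  unfold Blocked okAt
  simp only [desc, Set.mem_singleton_iff, exists_eq_left, Set.mem_ofPred_eq]
  constructor
  · intro h x y z hi
    constructor
    · intro hc
      by_contra hh
      push Not at hh
      exact h (Or.inr ⟨x, y, z, hi, hc, hh⟩)
    · intro hc hy
      exact h (Or.inl ⟨x, y, z, hi, hc, hy⟩)
  · rintro h (⟨x, y, z, hi, hc, hy⟩ | ⟨x, y, z, hi, hc, hy⟩)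
    · exact (h x y z hi).2 hc hy
    · obtain ⟨d, hd, hdz⟩ := (h x y z hi).1 hc
      exact hy d hd hdz

abbrev Sk (D : V → V → Prop) : V → V → Prop := fun a b => D a b ∨ D b a

theorem fwd {D : V → V → Prop} {Z : Set V} {t : V} : ∀ (rest : List V) (x y : V),
    Op D Z (x :: y :: rest) → List.IsChain (Sk D) (x :: y :: rest) → D x y →
    (y :: rest).getLast? = some t → ∃ d, ReflTransGen D y d ∧ (d = t ∨ d ∈ Z)
  | [], x, y, _, _, _, hl => ⟨y, .refl, Or.inl (by simpa using hl)⟩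
  | z :: r, x, y, ho, hc, hxy, hl => by
    by_cases hzy : D z y
    · obtain ⟨d, h1, h2⟩ := ho.1.1 ⟨hxy, hzy⟩
      exact ⟨d, h1, Or.inr h2⟩
    · have hyz : D y z := by
        have := hc.tail
        simp only [List.tail_cons, List.isChain_cons_cons] at this
        exact this.1.resolve_right hzy
      obtain ⟨d, h1, h2⟩ := fwd r y z ho.2 hc.tail hyz (by simpa using hl)
      exact ⟨d, .head hyz h1, h2⟩

/-- raw moral adjacency -/
def Mo (D : V → V → Prop) (W : Set V) (u v : V) : Prop :=
  u ∈ W ∧ v ∈ W ∧ (D u v ∨ D v u ∨ ∃ w ∈ W, D u w ∧ D v w)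

theorem Mo_symm {D : V → V → Prop} {W : Set V} {u v : V} (h : Mo D W u v) : Mo D W v u := by
  obtain ⟨h1, h2, h3 | h3 | ⟨w, hw, h3, h4⟩⟩ := h
  · exact ⟨h2, h1, Or.inr (Or.inl h3)⟩
  · exact ⟨h2, h1, Or.inl h3⟩
  · exact ⟨h2, h1, Or.inr (Or.inr ⟨w, hw, h4, h3⟩)⟩

def St (D : V → V → Prop) (W Z : Set V) (u v : V) : Prop :=
  Mo D W u v ∧ u ∉ Z ∧ v ∉ Z

abbrev Rc (D : V → V → Prop) (W Z : Set V) : V → V → Prop := ReflTransGen (St D W Z)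

theorem Rc_symm {D : V → V → Prop} {W Z : Set V} {u v : V} (h : Rc D W Z u v) : Rc D W Z v u := by
  induction h with
  | refl => exact .refl
  | tail _ h ih => exact .head ⟨Mo_symm h.1, h.2.2, h.2.1⟩ ih

theorem moral_of_open_aux {D : V → V → Prop} (hD : Acyclic D) {Z W : Set V} {t : V}
    (hcl : ∀ u v, D u v → v ∈ W → u ∈ W) (hZW : Z ⊆ W) (htW : t ∈ W) (htZ : t ∉ Z) :
    ∀ (n : ℕ) (rest : List V) (x : V), rest.length ≤ n → List.IsChain (Sk D) (x :: rest) →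
      Op D Z (x :: rest) → (x :: rest).getLast? = some t → x ∈ W → x ∉ Z → Rc D W Z x t := by
  have hcl' : ∀ u v, ReflTransGen D u v → v ∈ W → u ∈ W := by
    intro u v h hv
    induction h using ReflTransGen.head_induction_on with
    | refl => exact hv
    | head h _ ih => exact hcl _ _ h ih
  intro n
  induction n with
  | zero =>
    intro rest x hn hc ho hl hx hxZ
    have : rest = [] := by simpa using hn
    subst this
    have : x = t := by simpa using hl
    subst this
    exact .refl
  | succ n ih =>
    intro rest x hn hc ho hl hx hxZ
    match rest, hn, hc, ho, hl with
    | [], _, _, _, hl =>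
      have : x = t := by simpa using hl
      subst this
      exact .refl
    | [y], _, hc, _, hl =>
      have : y = t := by simpa using hl
      subst this
      have : D x y ∨ D y x := by simpa using hc
      exact .single ⟨⟨hx, htW, by tauto⟩, hxZ, htZ⟩
    | y :: z :: r, hn, hc, ho, hl =>
      have hl1 : (y :: z :: r).getLast? = some t := by simpa using hl
      have hl2 : (z :: r).getLast? = some t := by simpa using hl
      have hxy : D x y ∨ D y x := by
        simp only [List.isChain_cons_cons] at hc
        exact hc.1
      have hyW : y ∈ W := by
        by_cases h : D x y
        · obtain ⟨d, h1, rfl | h2⟩ := fwd _ x y ho hc h hl1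
          · exact hcl' _ _ h1 htW
          · exact hcl' _ _ h1 (hZW h2)
        · exact hcl _ _ (hxy.resolve_left h) hx
      simp only [List.length_cons] at hn
      by_cases hcol : D x y ∧ D z y
      · have hzW : z ∈ W := hcl _ _ hcol.2 hyW
        have hzZ : z ∉ Z := by
          match r, hl2, ho with
          | [], hl2, _ =>
            have : z = t := by simpa using hl2
            rw [this]; exact htZ
          | w :: r', _, ho =>
            exact ho.2.1.2 (fun h => ac_asymm hD hcol.2 h.1)
        exact .head ⟨⟨hx, hzW, Or.inr (Or.inr ⟨y, hyW, hcol⟩)⟩, hxZ, hzZ⟩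
          (ih r z (by omega) hc.tail.tail (Op_tail (Op_tail ho)) hl2 hzW hzZ)
      · have hyZ : y ∉ Z := ho.1.2 hcol
        exact .head ⟨⟨hx, hyW, by tauto⟩, hxZ, hyZ⟩
          (ih (z :: r) y (by simp; omega) hc.tail (Op_tail ho) hl1 hyW hyZ)

theorem anc_closed {D : V → V → Prop} {S : Set V} {u v : V} (h : ReflTransGen D u v)
    (hv : v ∈ anc D S) : u ∈ anc D S := by
  obtain ⟨w, hw, h2⟩ := hv
  exact ⟨w, hw, h.trans h2⟩

theorem subset_anc {D : V → V → Prop} {S : Set V} {u : V} (h : u ∈ S) : u ∈ anc D S :=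
  ⟨u, h, .refl⟩

/-- moral separation implies d-separation -/
theorem moral_of_open {D : V → V → Prop} (hD : Acyclic D) {Z : Set V} {s t : V}
    (hs : s ∉ Z) (ht : t ∉ Z) {p : List V} (hp : IsPath (Sk D) s t p) (hb : ¬ Blocked D Z p) :
    Rc D (anc D ({s, t} ∪ Z)) Z s t := by
  rw [not_blocked_iff] at hb
  obtain ⟨hc, hh, hl, -⟩ := hp
  match p, hh with
  | x :: rest, hh =>
    have : x = s := by simpa using hh
    subst this
    exact moral_of_open_aux (W := anc D ({x, t} ∪ Z)) hD (fun u v h hv => anc_closed (.single h) hv)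
      (fun z hz => subset_anc (Or.inr hz)) (subset_anc (Or.inl (Or.inr rfl))) ht rest.length rest x le_rfl hc hb hl
      (subset_anc (Or.inl (Or.inl rfl))) hs

def Cn (D : V → V → Prop) (Z : Set V) (s v : V) : Prop :=
  ∃ r, List.IsChain (Sk D) (v :: r) ∧ Op D Z (v :: r) ∧ (v :: r).getLast? = some s

def Tl (D : V → V → Prop) (Z : Set V) (s v : V) : Prop :=
  ∃ r, List.IsChain (Sk D) (v :: r) ∧ Op D Z (v :: r) ∧ (v :: r).getLast? = some s ∧
    ∀ u r', r = u :: r' → D v u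

def Hd (D : V → V → Prop) (Z : Set V) (s v : V) : Prop :=
  ∃ u r, List.IsChain (Sk D) (v :: u :: r) ∧ Op D Z (v :: u :: r) ∧
    (v :: u :: r).getLast? = some s ∧ D u v

theorem Tl.cn {D : V → V → Prop} {Z : Set V} {s v : V} (h : Tl D Z s v) : Cn D Z s v := by
  obtain ⟨r, h1, h2, h3, _⟩ := h
  exact ⟨r, h1, h2, h3⟩

theorem Hd.cn {D : V → V → Prop} {Z : Set V} {s v : V} (h : Hd D Z s v) : Cn D Z s v := by
  obtain ⟨u, r, h1, h2, h3, _⟩ := h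
  exact ⟨u :: r, h1, h2, h3⟩

theorem Cn.cases {D : V → V → Prop} {Z : Set V} {s v : V} (h : Cn D Z s v) :
    Tl D Z s v ∨ Hd D Z s v := by
  obtain ⟨r, h1, h2, h3⟩ := h
  match r, h1, h2, h3 with
  | [], h1, h2, h3 => exact Or.inl ⟨[], h1, h2, h3, by simp⟩
  | u :: r, h1, h2, h3 =>
    have h4 := h1
    simp only [List.isChain_cons_cons] at h4
    rcases h4.1 with h | h
    · exact Or.inl ⟨u :: r, h1, h2, h3, by rintro _ _ ⟨⟩; exact h⟩
    · exact Or.inr ⟨u, r, h1, h2, h3, h⟩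

theorem Tl.ext {D : V → V → Prop} (hD : Acyclic D) {Z : Set V} {s v w : V} (h : Tl D Z s v)
    (hv : v ∉ Z) (hw : Sk D w v) : ∃ r, List.IsChain (Sk D) (w :: v :: r) ∧
      Op D Z (w :: v :: r) ∧ (w :: v :: r).getLast? = some s := by
  obtain ⟨r, h1, h2, h3, h4⟩ := h
  refine ⟨r, ?_, ?_, by simpa using h3⟩
  · rw [List.isChain_cons_cons]; exact ⟨hw, h1⟩
  · match r, h2, h4 with
    | [], _, _ => trivial
    | u :: r, h2, h4 =>
      exact ⟨⟨fun h => absurd h.2 (ac_asymm hD (h4 _ _ rfl)), fun _ => hv⟩, h2⟩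

theorem Tl.up {D : V → V → Prop} (hD : Acyclic D) {Z : Set V} {s v w : V} (h : Tl D Z s v)
    (hv : v ∉ Z) (hw : D w v) : Tl D Z s w := by
  obtain ⟨r, h1, h2, h3⟩ := h.ext hD hv (Or.inl hw)
  exact ⟨v :: r, h1, h2, h3, by rintro _ _ ⟨⟩; exact hw⟩

theorem Cn.down {D : V → V → Prop} (hD : Acyclic D) {Z : Set V} {s v w : V} (h : Cn D Z s v)
    (hv : v ∉ Z) (hw : D v w) : Hd D Z s w := by
  rcases h.cases with h | ⟨u, r, h1, h2, h3, h4⟩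
  · obtain ⟨r, h1, h2, h3⟩ := h.ext hD hv (Or.inr hw)
    exact ⟨v, r, h1, h2, h3, hw⟩
  · refine ⟨v, u :: r, ?_, ?_, by simpa using h3, hw⟩
    · rw [List.isChain_cons_cons]; exact ⟨Or.inr hw, h1⟩
    · exact ⟨⟨fun h => absurd h.1 (ac_asymm hD hw), fun _ => hv⟩, h2⟩

theorem Hd.up {D : V → V → Prop} {Z : Set V} {s v w : V} (h : Hd D Z s v)
    (hv : v ∈ anc D Z) (hw : D w v) : Tl D Z s w := by
  obtain ⟨u, r, h1, h2, h3, h4⟩ := h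
  refine ⟨v :: u :: r, ?_, ?_, by simpa using h3, by rintro _ _ ⟨⟩; exact hw⟩
  · rw [List.isChain_cons_cons]; exact ⟨Or.inl hw, h1⟩
  · obtain ⟨d, hd, hd'⟩ := hv
    exact ⟨⟨fun _ => ⟨d, hd', hd⟩, fun h => absurd ⟨hw, h4⟩ h⟩, h2⟩

theorem Cn.downs {D : V → V → Prop} (hD : Acyclic D) {Z : Set V} {s v w : V} (h : Cn D Z s v)
    (hv : v ∉ anc D Z) (hw : ReflTransGen D v w) : Cn D Z s w := by
  induction hw using ReflTransGen.head_induction_on with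
  | refl => exact h
  | head h1 _ ih =>
    exact ih (h.down hD (fun hz => hv (subset_anc hz)) h1).cn
      (fun hz => hv (anc_closed (.single h1) hz))

theorem Tl.ups {D : V → V → Prop} (hD : Acyclic D) {Z : Set V} {s v : V}
    (hv : v ∉ anc D Z) (hw : ReflTransGen D v s) : Tl D Z s v := by
  induction hw using ReflTransGen.head_induction_on with
  | refl => exact ⟨[], by simp, trivial, by simp, by simp⟩
  | head h1 _ ih =>
    have hv' := fun hz => hv (anc_closed (.single h1) hz)
    exact (ih hv').up hD (fun hz => hv' (subset_anc hz)) h1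

theorem Hd.fix {D : V → V → Prop} (hD : Acyclic D) {Z : Set V} {s t c w : V} (h : Hd D Z s c)
    (hc : c ∈ anc D ({t, s} ∪ Z)) (hw : D w c) : Cn D Z s t ∨ Tl D Z s w := by
  by_cases hcz : c ∈ anc D Z
  · exact Or.inr (h.up hcz hw)
  · obtain ⟨d, (rfl | rfl) | hd, hcd⟩ := hc
    · exact Or.inl (h.cn.downs hD hcz hcd)
    · exact Or.inr ((Tl.ups hD hcz hcd).up hD (fun hz => hcz (subset_anc hz)) hw)
    · exact absurd ⟨d, hd, hcd⟩ hcz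

theorem Cn_of_Rc {D : V → V → Prop} (hD : Acyclic D) {Z : Set V} {s t v : V}
    (h : Rc D (anc D ({t, s} ∪ Z)) Z s v) : Cn D Z s t ∨ Cn D Z s v := by
  induction h with
  | refl => exact Or.inr ⟨[], by simp, trivial, by simp⟩
  | tail _ h ih =>
    rename_i v w _
    rcases ih with ih | ih
    · exact Or.inl ih
    obtain ⟨⟨hvW, hwW, hm⟩, hv, hw⟩ := h
    rcases hm with hm | hm | ⟨c, hc, h1, h2⟩
    · exact Or.inr (ih.down hD hv hm).cn
    · rcases ih.cases with ih | ih
      · exact Or.inr (ih.up hD hv hm).cn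
      · exact (ih.fix hD hvW hm).imp id Tl.cn
    · exact ((ih.down hD hv h1).fix hD hc h2).imp id Tl.cn

theorem exists_dup {l : List V} (h : ¬ l.Nodup) : ∃ a b c v, l = a ++ v :: (b ++ v :: c) := by
  induction l with
  | nil => simp at h
  | cons x l ih =>
    by_cases hx : x ∈ l
    · obtain ⟨b, c, rfl⟩ := List.append_of_mem hx
      exact ⟨[], b, c, x, rfl⟩
    · obtain ⟨a, b, c, v, rfl⟩ := ih (fun hl => h (List.nodup_cons.2 ⟨hx, hl⟩))
      exact ⟨x :: a, b, c, v, rfl⟩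

theorem shortcut {D : V → V → Prop} (hD : Acyclic D) {Z : Set V} {a b c : List V} {v : V}
    (hc : List.IsChain (Sk D) (a ++ v :: (b ++ v :: c)))
    (ho : Op D Z (a ++ v :: (b ++ v :: c))) : Op D Z (a ++ v :: c) := by
  have hsuf : Op D Z (v :: c) := by
    have : a ++ v :: (b ++ v :: c) = (a ++ v :: b) ++ (v :: c) := by simp
    rw [this] at ho
    exact Op_suffix ho
  rcases List.eq_nil_or_concat a with rfl | ⟨a, x, rfl⟩
  · exact hsuf
  have e1 : (a ++ [x]) ++ v :: (b ++ v :: c) = a ++ x :: v :: (b ++ v :: c) := by simp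
  have e2 : (a ++ [x]) ++ v :: c = a ++ x :: v :: c := by simp
  simp only [List.concat_eq_append] at *
  rw [e1] at ho hc
  rw [e2, Op_split]
  refine ⟨((Op_split _ _ _ _).1 ho).1, ?_⟩
  match c, hc, ho, hsuf with
  | [], _, _, _ => trivial
  | z :: c, hc, ho, hsuf =>
    refine ⟨?_, hsuf⟩
    obtain ⟨b0, b', hb⟩ : ∃ b0 b', b ++ v :: z :: c = b0 :: b' := by
      cases b <;> simp
    obtain ⟨b1, b'', hb1⟩ : ∃ b1 b'', v :: b = b'' ++ [b1] := by
      rcases List.eq_nil_or_concat (v :: b) with h | ⟨l, y, h⟩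
      · simp at h
      · exact ⟨y, l, by simpa using h⟩
    have hall := (Op_iff _).1 ho
    have o1 : okAt D Z x v b0 := hall _ _ _ ⟨a, b', by rw [hb]⟩
    have o2 : okAt D Z b1 v z := by
      refine hall _ _ _ ⟨a ++ x :: b'', c, ?_⟩
      have : v :: (b ++ v :: z :: c) = (v :: b) ++ v :: z :: c := rfl
      rw [this, hb1]; simp
    constructor
    · rintro ⟨hxv, hzv⟩
      by_cases hb0 : D b0 v
      · exact o1.1 ⟨hxv, hb0⟩
      · have hc2 : List.IsChain (Sk D) (v :: (b ++ v :: z :: c)) := by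
          have : a ++ x :: v :: (b ++ v :: z :: c) = (a ++ [x]) ++ v :: (b ++ v :: z :: c) := by simp
          rw [this] at hc
          exact (List.isChain_append.1 hc).2.1
        have hvb0 : D v b0 := by
          rw [hb] at hc2
          simp only [List.isChain_cons_cons] at hc2
          exact hc2.1.resolve_right hb0
        have e3 : v :: (b ++ v :: z :: c) = (v :: (b ++ [v, z])) ++ c := by simp
        have hc3 : List.IsChain (Sk D) (v :: (b ++ [v, z])) := by
          rw [e3] at hc2
          exact (List.isChain_append.1 hc2).1
        have ho3 : Op D Z (v :: (b ++ [v, z])) := by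
          rw [Op_iff]
          rintro x' y' z' ⟨s', t', he⟩
          apply hall
          refine ⟨a ++ x :: s', t' ++ c, ?_⟩
          rw [e3, he]; simp
        obtain ⟨b2, hb2⟩ : ∃ b2, b ++ [v, z] = b0 :: b2 := by
          cases b with
          | nil => simp at hb ⊢; exact hb.1
          | cons _ _ => simp at hb ⊢; exact hb.1
        have hlast : (b0 :: b2).getLast? = some z := by rw [← hb2]; simp
        rw [hb2] at ho3 hc3
        obtain ⟨d, h1, rfl | h2⟩ := fwd b2 v b0 ho3 hc3 hvb0 hlast
        · exact absurd (h1.trans (.single hzv)) (hD _ _ hvb0)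
        · exact ⟨d, .head hvb0 h1, h2⟩
    · intro hn
      by_cases hxv : D x v
      · exact o2.2 (fun h => hn ⟨hxv, h.2⟩)
      · exact o1.2 (fun h => hxv h.1)

theorem nodup_open {D : V → V → Prop} (hD : Acyclic D) {Z : Set V} {s t : V} :
    ∀ (n : ℕ) (p : List V), p.length ≤ n → List.IsChain (Sk D) p → p.head? = some t →
      p.getLast? = some s → Op D Z p → ∃ p, IsPath (Sk D) t s p ∧ Op D Z p := by
  intro n
  induction n with
  | zero =>
    intro p hn hc hh
    have : p = [] := by simpa using hn
    subst this
    simp at hh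
  | succ n ih =>
    intro p hn hc hh hl ho
    by_cases hnd : p.Nodup
    · exact ⟨p, ⟨hc, hh, hl, hnd⟩, ho⟩
    obtain ⟨a, b, c, v, rfl⟩ := exists_dup hnd
    refine ih (a ++ v :: c) (by simp at hn ⊢; omega) ?_ ?_ ?_ (shortcut hD hc ho)
    · have h1 := (List.isChain_split.1 hc)
      exact List.isChain_split.2 ⟨h1.1, by
        have : v :: (b ++ v :: c) = (v :: b) ++ v :: c := rfl
        rw [this] at h1
        exact (List.isChain_append.1 h1.2).2.1⟩
    · cases a <;> simpa using hh
    · have : a ++ v :: (b ++ v :: c) = (a ++ v :: b) ++ v :: c := by simp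
      rw [this, List.getLast?_append_of_ne_nil _ (by simp)] at hl
      rw [List.getLast?_append_of_ne_nil _ (by simp)]
      exact hl

/-- d-separation implies moral separation -/
theorem not_dsep_of_Rc {D : V → V → Prop} (hD : Acyclic D) {Z : Set V} {s t : V}
    (h : Rc D (anc D ({t, s} ∪ Z)) Z s t) : ¬ DSep D {t} {s} Z := by
  intro hd
  have : Cn D Z s t := (Cn_of_Rc hD h).elim id id
  obtain ⟨r, h1, h2, h3⟩ := this
  obtain ⟨p, hp, hop⟩ := nodup_open hD _ (t :: r) le_rfl h1 rfl h3 h2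
  exact (not_blocked_iff p).2 hop (hd t rfl s rfl p hp)

end helpers

section helpers2
variable {V : Type*}

theorem rtg_mono {r q : V → V → Prop} {u v : V} (hrq : ∀ a b, r a b → q a b)
    (h : ReflTransGen r u v) : ReflTransGen q u v := by
  induction h with
  | refl => exact .refl
  | tail _ h ih => exact .tail ih (hrq _ _ h)

theorem path_of_rtg {r : V → V → Prop} {s t : V} (h : ReflTransGen r s t) :
    ∃ p, IsPath (fun a b => a ≠ b ∧ r a b) s t p := by
  induction h using ReflTransGen.head_induction_on with
  | refl => exact ⟨[t], by simp [IsPath, List.Chain']⟩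
  | head h1 _ ih =>
    rename_i a c _
    obtain ⟨p, hc, hh, hl, hn⟩ := ih
    by_cases ha : a ∈ p
    · obtain ⟨p1, p2, rfl⟩ := List.append_of_mem ha
      refine ⟨a :: p2, (List.isChain_append.1 hc).2.1, rfl, ?_, (List.nodup_append.1 hn).2.1⟩
      rw [List.getLast?_append_of_ne_nil _ (by simp)] at hl
      exact hl
    · match p, hh with
      | x :: p, hh =>
        have : x = c := by simpa using hh
        subst this
        refine ⟨a :: x :: p, ?_, rfl, by simpa using hl, List.nodup_cons.2 ⟨ha, hn⟩⟩
        refine List.isChain_cons_cons.2 ⟨⟨?_, h1⟩, hc⟩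
        rintro rfl
        simp at ha

theorem chain_mem {r : V → V → Prop} : ∀ {p : List V} {x : V}, List.IsChain r (x :: p) →
    ∀ y ∈ p, ∃ a, r a y
  | [], _, _, y, hy => by simp at hy
  | z :: p, x, h, y, hy => by
    have h' := List.isChain_cons_cons.1 h
    rcases List.mem_cons.1 hy with rfl | hy
    · exact ⟨x, h'.1⟩
    · exact chain_mem h'.2 y hy

theorem rtg_of_path {r : V → V → Prop} {t : V} : ∀ {p : List V} {x : V}, List.IsChain r (x :: p) →
    (x :: p).getLast? = some t →
    ReflTransGen (fun a b => r a b ∧ a ∈ x :: p ∧ b ∈ x :: p) x t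
  | [], x, _, hl => by
    have : x = t := by simpa using hl
    subst this
    exact .refl
  | z :: p, x, h, hl => by
    have h' := List.isChain_cons_cons.1 h
    refine .head ⟨h'.1, by simp, by simp⟩ (rtg_mono ?_ (rtg_of_path h'.2 (by simpa using hl)))
    rintro a b ⟨h1, h2, h3⟩
    exact ⟨h1, List.mem_cons_of_mem _ h2, List.mem_cons_of_mem _ h3⟩

theorem H0_adj {D : V → V → Prop} {A Y : V} {L : Set V} {u v : V} :
    (H0 D A Y L).Adj u v ↔ u ≠ v ∧ Mo (pbd D A Y) (ancAYL D A Y L) u v := by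
  unfold H0 moral
  rw [SimpleGraph.fromRel_adj]
  constructor
  · rintro ⟨h, h1 | h1⟩
    · exact ⟨h, h1⟩
    · exact ⟨h, Mo_symm h1⟩
  · rintro ⟨h, h1⟩
    exact ⟨h, Or.inl h1⟩

theorem anc_pbd {D : V → V → Prop} {A Y : V} {S : Set V} (hA : A ∈ S) :
    anc (pbd D A Y) S = anc D S := by
  ext u
  constructor
  · rintro ⟨v, hv, h⟩
    exact ⟨v, hv, rtg_mono (fun a b h => h.1) h⟩
  · rintro ⟨v, hv, h⟩
    induction h using ReflTransGen.head_induction_on with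
    | refl => exact ⟨v, hv, .refl⟩
    | head h1 _ ih =>
      rename_i a c _
      by_cases ha : a = A
      · exact ⟨A, hA, by rw [ha]⟩
      · exact anc_closed (.single ⟨h1, fun h => ha h.1⟩) ih

theorem pbd_acyclic {D : V → V → Prop} (h : Acyclic D) (A Y : V) : Acyclic (pbd D A Y) :=
  fun u v huv hvu => h u v huv.1 (rtg_mono (fun _ _ h => h.1) hvu)

theorem Mo_mono {D : V → V → Prop} {W W' : Set V} (hW : W ⊆ W') {u v : V} (h : Mo D W u v) :
    Mo D W' u v := by
  obtain ⟨h1, h2, h3 | h3 | ⟨w, hw, h3⟩⟩ := h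
  · exact ⟨hW h1, hW h2, Or.inl h3⟩
  · exact ⟨hW h1, hW h2, Or.inr (Or.inl h3)⟩
  · exact ⟨hW h1, hW h2, Or.inr (Or.inr ⟨w, hW hw, h3⟩)⟩

theorem Rc_mono {D : V → V → Prop} {W W' Z : Set V} (hW : W ⊆ W') {u v : V} (h : Rc D W Z u v) :
    Rc D W' Z u v := rtg_mono (fun _ _ h => ⟨Mo_mono hW h.1, h.2⟩) h

theorem anc_sub {D : V → V → Prop} {S T : Set V} (h : S ⊆ anc D T) : anc D S ⊆ anc D T := by
  rintro u ⟨v, hv, huv⟩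
  exact anc_closed huv (h hv)

/-- vertices reached from `Y` in `H0` through `Ignore` -/
def Kc (D : V → V → Prop) (A Y : V) (L N : Set V) : Set V :=
  fun v => ReflTransGen (fun a b => Mo (pbd D A Y) (ancAYL D A Y L) a b ∧ b ∈ Ignore D A Y L N) Y v

theorem Kc_sub {D : V → V → Prop} {A Y : V} {L N : Set V} {v : V} (h : v ∈ Kc D A Y L N) :
    v = Y ∨ v ∈ Ignore D A Y L N := by
  rcases ReflTransGen.cases_tail (show ReflTransGen _ _ _ from h) with h | ⟨_, _, h⟩
  · exact Or.inl h
  · exact Or.inr h.2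

theorem Y_H1 {D : V → V → Prop} {A Y : V} {L N : Set V} : Y ∈ H1verts D A Y L N :=
  ⟨subset_anc (Or.inl (Or.inr rfl)), fun h => h.1.2 (Or.inr rfl)⟩

theorem mem_O_of_Kc {D : V → V → Prop} {A Y : V} {L N : Set V} {v u : V}
    (h : v ∈ Kc D A Y L N) (hm : Mo (pbd D A Y) (ancAYL D A Y L) v u)
    (hu : u ∈ H1verts D A Y L N) (huY : u ≠ Y) : u ∈ (H1 D A Y L N).neighborSet Y := by
  rw [SimpleGraph.mem_neighborSet]
  unfold H1
  rw [SimpleGraph.fromRel_adj]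
  refine ⟨huY.symm, Or.inl ⟨Y_H1, hu, Or.inl ?_⟩⟩
  have h2 : ReflTransGen (fun a b => Mo (pbd D A Y) (ancAYL D A Y L) a b ∧
      (b ∈ Ignore D A Y L N ∨ b = u)) Y u :=
    .tail (rtg_mono (fun a b h => ⟨h.1, Or.inl h.2⟩) h) ⟨hm, Or.inr rfl⟩
  obtain ⟨p, hc, hh, hl, hn⟩ := path_of_rtg h2
  refine ⟨p, ⟨List.IsChain.imp (fun a b h => H0_adj.2 ⟨h.1, h.2.1⟩) hc, hh, hl, hn⟩, ?_⟩
  match p, hh with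
  | y :: p, hh =>
    have : y = Y := by simpa using hh
    subst this
    intro x hx hxY hxu
    obtain ⟨a, ha⟩ := chain_mem hc x ((List.mem_cons.1 hx).resolve_left hxY)
    exact ha.2.2.resolve_right hxu

theorem Kc_closed {D : V → V → Prop} {A Y : V} {L N : Set V} {v u : V}
    (h : v ∈ Kc D A Y L N) (hm : Mo (pbd D A Y) (ancAYL D A Y L) v u)
    (hu : u ∉ (H1 D A Y L N).neighborSet Y) : u ∈ Kc D A Y L N := by
  by_cases huY : u = Y
  · rw [huY]; exact ReflTransGen.refl
  by_cases hI : u ∈ Ignore D A Y L N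
  · exact ReflTransGen.tail h ⟨hm, hI⟩
  · exact absurd (mem_O_of_Kc h hm ⟨hm.2.1, hI⟩ huY) hu

theorem O_elim {D : V → V → Prop} {A Y : V} {L N : Set V} (hAY : A ≠ Y) (hLY : Y ∉ L) {o : V}
    (ho : o ∈ (H1 D A Y L N).neighborSet Y) :
    o ∈ H1verts D A Y L N ∧ o ≠ Y ∧ (o ∈ L ∨ ∀ Z : Set V, (∀ x ∈ Z, x ∉ Ignore D A Y L N) →
      Y ∉ Z → o ∉ Z → Rc (pbd D A Y) (ancAYL D A Y L) Z Y o) := by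
  have key : ∀ a b p, IsPath (H0 D A Y L).Adj a b p →
      (∀ x ∈ p, x ≠ a → x ≠ b → x ∈ Ignore D A Y L N) →
      ∀ Z : Set V, (∀ x ∈ Z, x ∉ Ignore D A Y L N) →
      a ∉ Z → b ∉ Z → Rc (pbd D A Y) (ancAYL D A Y L) Z a b := by
    rintro a b p ⟨hc, hh, hl, -⟩ hp Z hZ ha hb
    have hpZ : ∀ x ∈ p, x ∉ Z := by
      intro x hx hxZ
      refine hZ x hxZ (hp x hx ?_ ?_)
      · rintro rfl; exact ha hxZ
      · rintro rfl; exact hb hxZ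
    match p, hh with
    | y :: p, hh =>
      have : y = a := by simpa using hh
      subst this
      exact rtg_mono
        (fun u v h => ⟨(H0_adj.1 h.1).2, hpZ _ h.2.1, hpZ _ h.2.2⟩) (rtg_of_path hc hl)
  rw [SimpleGraph.mem_neighborSet] at ho
  unfold H1 at ho
  rw [SimpleGraph.fromRel_adj] at ho
  obtain ⟨hne, ⟨_, h2, ⟨p, hp, hp2⟩ | h | h⟩ | ⟨h2, _, ⟨p, hp, hp2⟩ | h | h⟩⟩ := ho
  · exact ⟨h2, hne.symm, Or.inr (key _ _ p hp hp2)⟩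
  · exact absurd h.1.symm hAY
  · exact ⟨h2, hne.symm, Or.inl h.2⟩
  · exact ⟨h2, hne.symm, Or.inr (fun Z h1 h2 h3 => Rc_symm (key _ _ p hp hp2 Z h1 h3 h2))⟩
  · exact absurd h.2 hLY
  · exact absurd h.1.symm hne

end helpers2

theorem stmt11 {V : Type*} [Fintype V] [DecidableEq V]
    (D : V → V → Prop) (hacy : Acyclic D)
    (A Y : V) (L N : Set V)
    (hAY : A ≠ Y) (hAancY : Relation.ReflTransGen D A Y)
    (hLnd : L ∩ desc D {A} = ∅) (hLY : Y ∉ L)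
    (hN : {A, Y} ∪ L ⊆ N)
    (hadm : Admissible D A Y L N) :
    GAC D A Y L N ((H1 D A Y L N).neighborSet Y) ∧
    ((N ⊆ ancAYL D A Y L ∨ N = Set.univ) →
      ∀ Z, GAC D A Y L N Z →
        DSep D {Y} (Z \ (H1 D A Y L N).neighborSet Y)
          ({A} ∪ (H1 D A Y L N).neighborSet Y) ∧
        DSep D {A} ((H1 D A Y L N).neighborSet Y \ Z) Z) := by
  set O := (H1 D A Y L N).neighborSet Y with hO
  set W := ancAYL D A Y L with hW
  have hYcn : Y ∈ cn D A Y := ⟨hAY.symm, hAancY, .refl⟩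
  have hYf : Y ∈ forb D A Y := Or.inl ⟨Y, hYcn, .refl⟩
  have hAf : A ∈ forb D A Y := Or.inr rfl
  have hLW : L ⊆ W := fun x hx => subset_anc (Or.inr hx)
  have hAW : A ∈ W := subset_anc (Or.inl (Or.inl rfl))
  have hYW : Y ∈ W := subset_anc (Or.inl (Or.inr rfl))
  have hdA : ∀ c ∈ cn D A Y, ¬ ReflTransGen D c A := fun c hc h =>
    hc.1 (ac_antisymm hacy h hc.2.1)
  have hfA : ∀ x ∈ forb D A Y, ReflTransGen D A x := by
    rintro x (⟨c, hc, h⟩ | rfl)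
    · exact hc.2.1.trans h
    · exact .refl
  have hLA : ∀ x ∈ L, ¬ ReflTransGen D A x := by
    intro x hx h
    have : x ∈ L ∩ desc D {A} := ⟨hx, A, rfl, h⟩
    rw [hLnd] at this
    exact this
  have hAL : A ∉ L := fun h => hLA A h .refl
  have hZf : ∀ Z : Set V, Z ∩ forb D A Y = ∅ → ∀ x ∈ Z, x ∉ forb D A Y := by
    intro Z h x hx hf
    have : x ∈ Z ∩ forb D A Y := ⟨hx, hf⟩
    rw [h] at this
    exact this
  have hWZ : ∀ Z : Set V, L ⊆ Z → W ⊆ anc D ({A, Y} ∪ Z) := by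
    intro Z hLZ
    apply anc_sub
    rintro x (hx | hx)
    · exact subset_anc (Or.inl hx)
    · exact subset_anc (Or.inr (hLZ hx))
  have hsep : ∀ Z, GAC D A Y L N Z → ¬ Rc (pbd D A Y) (anc D ({A, Y} ∪ Z)) Z Y A := by
    rintro Z ⟨hd, -, -, -⟩ hr
    rw [← anc_pbd (Y := Y) (S := {A, Y} ∪ Z) (Or.inl (Or.inl rfl))] at hr
    exact not_dsep_of_Rc (pbd_acyclic hacy A Y) hr hd
  have hZI : ∀ Z, GAC D A Y L N Z → ∀ x ∈ Z, x ∉ Ignore D A Y L N := by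
    rintro Z ⟨-, h1, -, h2⟩ x hx ⟨-, h | h⟩
    · exact h.2 (h2 hx)
    · exact hZf Z h1 x hx h
  have hAO : A ∉ O := by
    intro hA
    obtain ⟨Z, hZ⟩ := hadm
    obtain ⟨-, -, h | h⟩ := O_elim hAY hLY hA
    · exact hAL h
    · exact hsep Z hZ (Rc_mono (hWZ Z hZ.2.2.1)
        (h Z (hZI Z hZ) (fun h => hZf Z hZ.2.1 _ h hYf) (fun h => hZf Z hZ.2.1 _ h hAf)))
  have hYO : Y ∉ O := fun h => (O_elim hAY hLY h).2.1 rfl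
  have hOW : O ⊆ W := fun o ho => (O_elim hAY hLY ho).1.1
  have hOA : ∀ o ∈ O, o ∉ Ignore D A Y L N := fun o ho => (O_elim hAY hLY ho).1.2
  have hOin : ∀ o ∈ O, o ∈ N ∧ o ∉ forb D A Y := by
    intro o ho
    have hne : o ∉ ({A, Y} : Set V) := by
      rintro (rfl | h)
      · exact hAO ho
      · have h : o = Y := h
        subst h
        exact hYO ho
    constructor
    · by_contra hn
      exact hOA o ho ⟨⟨hOW ho, hne⟩, Or.inl ⟨trivial, hn⟩⟩
    · intro hf
      exact hOA o ho ⟨⟨hOW ho, hne⟩, Or.inr hf⟩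
  have hLO : L ⊆ O := by
    intro x hx
    have hxY : Y ≠ x := by rintro rfl; exact hLY hx
    have hxI : x ∉ Ignore D A Y L N := by
      rintro ⟨-, h | h⟩
      · exact h.2 (hN (Or.inr hx))
      · exact hLA x hx (hfA x h)
    change (H1 D A Y L N).Adj Y x
    unfold H1
    rw [SimpleGraph.fromRel_adj]
    exact ⟨hxY, Or.inl ⟨Y_H1, ⟨hLW hx, hxI⟩, Or.inr (Or.inr ⟨rfl, hx⟩)⟩⟩
  have hAK : A ∉ Kc D A Y L N := by
    intro h
    rcases Kc_sub h with h | h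
    · exact hAY h
    · exact h.1.2 (Or.inl rfl)
  refine ⟨⟨?_, ?_, hLO, fun o ho => (hOin o ho).1⟩, ?_⟩
  · rintro s rfl t rfl p hp
    by_contra hb
    have hr := moral_of_open (pbd_acyclic hacy s t) hAO hYO hp hb
    rw [anc_pbd (S := {s, t} ∪ O) (Or.inl (Or.inl rfl))] at hr
    have hsub : anc D ({s, t} ∪ O) ⊆ W := by
      apply anc_sub
      rintro x ((rfl | rfl) | hx)
      · exact hAW
      · exact hYW
      · exact hOW hx
    have hr := Rc_symm (Rc_mono hsub hr)
    have : ∀ v, Rc (pbd D s t) W O t v → v ∈ Kc D s t L N := by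
      intro v h
      induction h with
      | refl => exact ReflTransGen.refl
      | tail _ h ih => exact Kc_closed ih h.1 h.2.2
    exact hAK (this _ hr)
  · ext x
    exact ⟨fun h => (hOin x h.1).2 h.2, fun h => h.elim⟩
  · intro hcond Z hZ
    have hZf' := hZf Z hZ.2.1
    have hAZ : A ∉ Z := fun h => hZf' _ h hAf
    have hYZ : Y ∉ Z := fun h => hZf' _ h hYf
    constructor
    · rintro s rfl z ⟨hz, hzO⟩ p hp
      by_contra hb
      have hzA : z ≠ A := by rintro rfl; exact hAZ hz
      have hr := moral_of_open hacy (s := s) (t := z) (Z := {A} ∪ O)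
        (by rintro (h | h); exacts [hAY h.symm, hYO h])
        (by rintro (h | h); exacts [hzA h, hzO h]) hp hb
      rcases hcond with hc | hNu
      · have hsub : anc D ({s, z} ∪ ({A} ∪ O)) ⊆ W := by
          apply anc_sub
          rintro x ((rfl | rfl) | (rfl | hx))
          · exact hYW
          · exact hc (hZ.2.2.2 hz)
          · exact hAW
          · exact hOW hx
        have hr := Rc_mono hsub hr
        have : ∀ v, Rc D W ({A} ∪ O) s v → v ∈ Kc D A s L N := by
          intro v h
          induction h with
          | refl => exact ReflTransGen.refl
          | tail _ h ih =>
            rename_i u v _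
            obtain ⟨⟨h1, h2, h3⟩, hu, hv⟩ := h
            have huA : u ≠ A := fun h => hu (Or.inl h)
            have hvA : v ≠ A := fun h => hv (Or.inl h)
            refine Kc_closed ih ⟨h1, h2, ?_⟩ (fun h => hv (Or.inr h))
            rcases h3 with h3 | h3 | ⟨w, hw, h3, h4⟩
            · exact Or.inl ⟨h3, fun h => huA h.1⟩
            · exact Or.inr (Or.inl ⟨h3, fun h => hvA h.1⟩)
            · exact Or.inr (Or.inr ⟨w, hw, ⟨h3, fun h => huA h.1⟩, ⟨h4, fun h => hvA h.1⟩⟩)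
        rcases Kc_sub (this _ hr) with h | h
        · exact hYZ (h ▸ hz)
        · exact hZI Z hZ z hz h
      · have hcn : ∀ v c, c ∈ cn D A s → ReflTransGen D c v → ReflTransGen D v s →
            v ∈ cn D A s := by
          intro v c hc h1 h2
          exact ⟨by rintro rfl; exact hdA c hc h1, hc.2.1.trans h1, h2⟩
        have hdW : ∀ v c, c ∈ cn D A s → ReflTransGen D c v →
            v ∈ anc D ({s, z} ∪ ({A} ∪ O)) → v ∈ cn D A s := by
          rintro v c hc h1 ⟨w, hw, h2⟩
          rcases hw with (hw | hw) | (hw | hw)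
          · exact hcn v c hc h1 (hw ▸ h2)
          · have hw : w = z := hw
            subst hw
            exact absurd (Or.inl ⟨c, hc, h1.trans h2⟩) (hZf' _ hz)
          · have hw : w = A := hw
            subst hw
            exact absurd (h1.trans h2) (hdA c hc)
          · exact absurd (Or.inl ⟨c, hc, h1.trans h2⟩) (hOin _ hw).2
        have hcW : ∀ v, ReflTransGen D v s → v ∈ W := fun v hv => anc_closed hv hYW
        have hcK : ∀ c, c ∈ cn D A s → c ∈ Kc D A s L N := by
          intro c hc
          have h := hc.2.2
          induction h using ReflTransGen.head_induction_on with
          | refl => exact ReflTransGen.refl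
          | head h1 h2 ih =>
            rename_i a b
            have hb' : b ∈ cn D A s := hcn b a hc (.single h1) h2
            by_cases has : a = s
            · rw [has]; exact ReflTransGen.refl
            refine ReflTransGen.tail (ih hb') ⟨⟨hcW b h2, hcW a (.head h1 h2),
              Or.inr (Or.inl ⟨h1, fun h => hc.1 h.1⟩)⟩, ⟨hcW a (.head h1 h2), ?_⟩,
              Or.inr (Or.inl ⟨a, hc, .refl⟩)⟩
            rintro (h | h)
            · exact hc.1 h
            · exact has h
        have hpa : ∀ u c, c ∈ cn D A s → D u c → u ∉ ({A} ∪ O : Set V) → u ∈ cn D A s := by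
          intro u c hc huc hu
          by_contra hn
          have huA : u ≠ A := fun h => hu (Or.inl h)
          have hus : ReflTransGen D u s := .head huc hc.2.2
          have hus' : u ≠ s := by rintro rfl; exact hn hYcn
          apply hu
          refine Or.inr (mem_O_of_Kc (hcK c hc) ⟨hcW c hc.2.2, hcW u hus,
            Or.inr (Or.inl ⟨huc, fun h => huA h.1⟩)⟩ ⟨hcW u hus, ?_⟩ hus')
          rintro ⟨-, h | ⟨c', hc', h⟩ | h⟩
          · rw [hNu] at h; exact h.2 trivial
          · exact hn (hcn u c' hc' h hus)
          · exact huA h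
        have : ∀ v, Rc D (anc D ({s, z} ∪ ({A} ∪ O))) ({A} ∪ O) s v → v ∈ cn D A s := by
          intro v h
          induction h with
          | refl => exact hYcn
          | tail _ h ih =>
            rename_i u v _
            obtain ⟨⟨h1, h2, h3⟩, hu, hv⟩ := h
            rcases h3 with h3 | h3 | ⟨w, hw, h3, h4⟩
            · exact hdW v u ih (.single h3) h2
            · exact hpa v u ih h3 hv
            · exact hpa v w (hdW w u ih (.single h3) hw) h4 hv
        exact hZf' z hz (Or.inl ⟨z, this z hr, .refl⟩)
    · rintro s rfl o ⟨ho, hoZ⟩ p hp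
      by_contra hb
      have hr := moral_of_open hacy hAZ hoZ hp hb
      apply hsep Z hZ
      have hncn : ∀ v ∈ anc D ({s, o} ∪ Z), v ∉ cn D s Y := by
        rintro v ⟨w, hw, h⟩ hv
        rcases hw with (hw | hw) | hw
        · exact hdA v hv (hw ▸ h)
        · have hw : w = o := hw
          subst hw
          exact (hOin w ho).2 (Or.inl ⟨v, hv, h⟩)
        · exact hZf' w hw (Or.inl ⟨v, hv, h⟩)
      have hsub : anc D ({s, o} ∪ Z) ⊆ anc D ({s, Y} ∪ Z) := by
        apply anc_sub
        rintro x ((rfl | rfl) | hx)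
        · exact subset_anc (Or.inl (Or.inl rfl))
        · exact hWZ Z hZ.2.2.1 (hOW ho)
        · exact subset_anc (Or.inr hx)
      have hr2 : Rc (pbd D s Y) (anc D ({s, Y} ∪ Z)) Z s o := by
        refine rtg_mono ?_ hr
        rintro u v ⟨⟨h1, h2, h3⟩, h4⟩
        refine ⟨Mo_mono hsub ⟨h1, h2, ?_⟩, h4⟩
        rcases h3 with h3 | h3 | ⟨w, hw, h3, h4⟩
        · exact Or.inl ⟨h3, fun h => hncn _ h2 h.2⟩
        · exact Or.inr (Or.inl ⟨h3, fun h => hncn _ h1 h.2⟩)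
        · exact Or.inr (Or.inr ⟨w, hw, ⟨h3, fun h => hncn _ hw h.2⟩, ⟨h4, fun h => hncn _ hw h.2⟩⟩)
      obtain ⟨-, -, h | h⟩ := O_elim hAY hLY ho
      · exact absurd (hZ.2.2.1 h) hoZ
      · exact (Rc_mono (hWZ Z hZ.2.2.1) (h Z (hZI Z hZ) hYZ hoZ)).trans (Rc_symm hr2)

end CausalGraph
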